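/- Let n ≥ 3, m₁ ≥ 0, m₂ ≥ 1, λ = (0, m₂, …, m₂, m₁+m₂) and λ⁺ = (0, m₂+1, …, m₂+1, m₁+m₂+1). Then for every 2 ≤ j ≤ n and every k ∈ ℤ_{≥0}^n: c^{λ⁺}_{j|1}(k_1+1, …, k_{j−1}+1, k_j, k_{j+1}+1, …, k_n+1) = Σ_{i=2}^{j} c^{λ}_{i|1}(k_1,…,k_n) + q^{m₂} · Σ_{i=j+1}^{n} c^{λ}_{i|1}(k_1,…,k_n) + c^{λ}_{1|2}(k_1,…,k_n). -/

import Mathlib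

open Finset

namespace CO

/-- The column diagram `dg'(λ)` of a composition, as a finset of boxes `(i, j)`,
`1 ≤ i ≤ n`, `1 ≤ j ≤ λ_i`. -/
def dgF (n : ℕ) (lam : ℕ → ℕ) : Finset (ℕ × ℕ) :=
  (Finset.Icc 1 n).biUnion fun i => (Finset.Icc 1 (lam i)).image fun j => (i, j)

/-- The augmented diagram `d̂g(λ)`: one extra box `(i, 0)` below each column. -/
def augF (n : ℕ) (lam : ℕ → ℕ) : Finset (ℕ × ℕ) :=
  dgF n lam ∪ (Finset.Icc 1 n).image fun i => (i, 0)

/-- The box `d(u)` directly below a box. -/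
def dbox (u : ℕ × ℕ) : ℕ × ℕ := (u.1, u.2 - 1)

/-- The augmented filling `σ̂`: equal to `σ` on positive rows and to `i` on `(i, 0)`. -/
def aug (σ : ℕ × ℕ → ℕ) (u : ℕ × ℕ) : ℕ := if u.2 = 0 then u.1 else σ u

/-- A filling takes values in `{1, …, n}` on the diagram. -/
def IsFilling (n : ℕ) (lam : ℕ → ℕ) (σ : ℕ × ℕ → ℕ) : Prop :=
  ∀ u ∈ dgF n lam, 1 ≤ σ u ∧ σ u ≤ n

/-- Attacking boxes: same row, or consecutive rows with the lower box to the right. -/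
def Attack (u v : ℕ × ℕ) : Prop :=
  u ≠ v ∧ (u.2 = v.2 ∨ (u.2 = v.2 + 1 ∧ u.1 < v.1) ∨ (v.2 = u.2 + 1 ∧ v.1 < u.1))

/-- A non-attacking filling: `σ̂` takes distinct values on attacking pairs of the
augmented diagram. -/
def NonAttacking (n : ℕ) (lam : ℕ → ℕ) (σ : ℕ × ℕ → ℕ) : Prop :=
  ∀ u ∈ augF n lam, ∀ v ∈ augF n lam, Attack u v → aug σ u ≠ aug σ v

/-- The arm of a box `u`. -/
def armF (n : ℕ) (lam : ℕ → ℕ) (u : ℕ × ℕ) : Finset (ℕ × ℕ) :=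
  ((dgF n lam).filter fun v => v.1 < u.1 ∧ v.2 = u.2 ∧ lam v.1 ≤ lam u.1) ∪
    ((augF n lam).filter fun v => u.1 < v.1 ∧ v.2 + 1 = u.2 ∧ lam v.1 < lam u.1)

/-- `a(u) = |arm(u)|`. -/
def armCard (n : ℕ) (lam : ℕ → ℕ) (u : ℕ × ℕ) : ℕ := (armF n lam u).card

/-- The number of inversions of `σ̂`: attacking pairs `u, u'` with `σ̂(u) < σ̂(u')`
and (same row with `u` to the left, or `u'` one row above `u` strictly to the left). -/
def invCard (n : ℕ) (lam : ℕ → ℕ) (σ : ℕ × ℕ → ℕ) : ℕ :=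
  ((augF n lam ×ˢ augF n lam).filter fun p =>
    aug σ p.1 < aug σ p.2 ∧
      ((p.1.2 = p.2.2 ∧ p.1.1 < p.2.1) ∨ (p.2.2 = p.1.2 + 1 ∧ p.2.1 < p.1.1))).card

/-- The descent set of `σ̂`. -/
def desF (n : ℕ) (lam : ℕ → ℕ) (σ : ℕ × ℕ → ℕ) : Finset (ℕ × ℕ) :=
  (dgF n lam).filter fun u => aug σ (dbox u) < aug σ u

/-- The statistic `coinv(σ̂)` (as an integer). -/
def coinv (n : ℕ) (lam : ℕ → ℕ) (σ : ℕ × ℕ → ℕ) : ℤ :=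
  (∑ u ∈ dgF n lam, (armCard n lam u : ℤ)) - invCard n lam σ +
    (((Finset.Icc 1 n ×ˢ Finset.Icc 1 n).filter fun p =>
      p.1 < p.2 ∧ lam p.1 ≤ lam p.2).card : ℤ) +
    ∑ u ∈ desF n lam σ, (armCard n lam u : ℤ)

/-- The statistic `T(σ)`. -/
def Tstat (n : ℕ) (lam : ℕ → ℕ) (σ : ℕ × ℕ → ℕ) : ℤ :=
  coinv n lam σ -
    ∑ u ∈ (dgF n lam).filter fun u => aug σ u ≠ aug σ (dbox u), (armCard n lam u : ℤ)

/-- Antidominant composition: `λ_1 ≤ ⋯ ≤ λ_n`. -/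
def Antidominant (n : ℕ) (lam : ℕ → ℕ) : Prop :=
  ∀ i j, 1 ≤ i → i ≤ j → j ≤ n → lam i ≤ lam j

/-- Appropriate filling: non-attacking with `T(σ) = 0`. -/
def Appropriate (n : ℕ) (lam : ℕ → ℕ) (σ : ℕ × ℕ → ℕ) : Prop :=
  IsFilling n lam σ ∧ NonAttacking n lam σ ∧ Tstat n lam σ = 0

/-- The operation `π` on compositions: `π(λ) = (λ_n + 1, λ_1, …, λ_{n-1})`. -/
def piComp (n : ℕ) (lam : ℕ → ℕ) : ℕ → ℕ :=
  fun i => if i = 1 then lam n + 1 else lam (i - 1)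

/-- The operation `π` on boxes. -/
def piBox (n : ℕ) (u : ℕ × ℕ) : ℕ × ℕ :=
  if u.1 < n then (u.1 + 1, u.2) else (1, u.2 + 1)

/-- Extension by zero of a function defined on the diagram. -/
def ext (n : ℕ) (lam : ℕ → ℕ) (f : {u // u ∈ dgF n lam} → ℕ) : ℕ × ℕ → ℕ :=
  fun u => if h : u ∈ dgF n lam then f ⟨u, h⟩ else 0

/-- `qstat(σ) = Σ (l(u) + 1)` over boxes `u` with `σ̂(u) < σ̂(d(u))`. -/
def qstat (n : ℕ) (lam : ℕ → ℕ) (σ : ℕ × ℕ → ℕ) : ℕ :=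
  ∑ u ∈ (dgF n lam).filter fun u => aug σ u < aug σ (dbox u), (lam u.1 - u.2 + 1)

end CO

namespace CO

/-- The statistic `asc(τ) = Σ (l(u) + 1)` over boxes `u = (i, j)` with `j ≥ 2` and
`τ(u) < τ(d(u))`. -/
def ascStat (n : ℕ) (mu : ℕ → ℕ) (τ : ℕ × ℕ → ℕ) : ℕ :=
  ∑ u ∈ (dgF n mu).filter fun u => 2 ≤ u.2 ∧ τ u < τ (dbox u), (mu u.1 - u.2 + 1)

/-- The greedy rule (iii): for boxes in rows `≥ 2`, with `S = τ(arm(u)) ∪ {τ(u)}`,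
`τ(u)` is the minimum of `{x ∈ S : x ≥ τ(d(u))}` if nonempty, and `min S` otherwise. -/
def GreedyRule (n : ℕ) (mu : ℕ → ℕ) (τ : ℕ × ℕ → ℕ) : Prop :=
  ∀ u ∈ dgF n mu, 2 ≤ u.2 →
    (({x ∈ τ '' ↑(armF n mu u) ∪ {τ u} | τ (dbox u) ≤ x}.Nonempty →
        τ u = sInf {x ∈ τ '' ↑(armF n mu u) ∪ {τ u} | τ (dbox u) ≤ x}) ∧
      (¬ {x ∈ τ '' ↑(armF n mu u) ∪ {τ u} | τ (dbox u) ≤ x}.Nonempty →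
        τ u = sInf (τ '' ↑(armF n mu u) ∪ {τ u})))

/-- Conditions (i)–(iv) on the fillings `τ` counted by `c_a^μ(k)`. -/
def CCond (n : ℕ) (mu : ℕ → ℕ) (a : ℕ → ℕ) (k : ℕ → ℕ) (τ : ℕ × ℕ → ℕ) : Prop :=
  (∀ u ∈ dgF n mu, 1 ≤ τ u ∧ τ u ≤ n) ∧
    (∀ j, (j, 1) ∈ dgF n mu → τ (j, 1) = a j) ∧
    (∀ u ∈ dgF n mu, ∀ v ∈ dgF n mu, Attack u v → τ u ≠ τ v) ∧
    GreedyRule n mu τ ∧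
    ∀ i, 1 ≤ i → i ≤ n → ((dgF n mu).filter fun u => τ u = i).card = k i

open Classical in
/-- The coefficient `c_a^μ(k) ∈ ℤ[q]`: the generating function `Σ_τ q^{asc(τ)}`
over fillings satisfying (i)–(iv). -/
noncomputable def cCoef (n : ℕ) (mu : ℕ → ℕ) (a : ℕ → ℕ) (k : ℕ → ℕ) : Polynomial ℤ :=
  ∑ f ∈ (Fintype.piFinset fun _ : {u // u ∈ dgF n mu} => Finset.Icc 1 n).filter
      fun f => CCond n mu a k (ext n mu f),
    Polynomial.X ^ ascStat n mu (ext n mu f)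

end CO

namespace CO

/-- The bottom-row tuple defining `c^μ_{ã|b}` (for `s = n - 1`): entry `b` at
position `n`, and the elements of `{1, …, n} ∖ {ã, b}` in decreasing order at
positions `2, …, n - 1`. -/
def aTuple (n atil b : ℕ) : ℕ → ℕ :=
  fun j => if j = n then b
    else ((((Finset.Icc 1 n).erase atil).erase b).sort (· ≤ ·)).getD (n - 1 - j) 0

/-- The coefficient `c^μ_{ã|b}(k)`. -/
noncomputable def cBar (n : ℕ) (mu : ℕ → ℕ) (atil b : ℕ) (k : ℕ → ℕ) : Polynomial ℤ :=
  cCoef n mu (aTuple n atil b) k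

end CO


namespace CO

/-- The shapes of the theorem. -/
def lamF (n m1 m2 : ℕ) : ℕ → ℕ := fun i => if i = n then m1 + m2 else if 2 ≤ i then m2 else 0

/-- `a` restricted to `[2,n]` is an injective tuple with values in `[1,n]` and hole `h`. -/
def Good (n : ℕ) (a : ℕ → ℕ) (h : ℕ) : Prop :=
  1 ≤ h ∧ h ≤ n ∧ (∀ i, 2 ≤ i → i ≤ n → 1 ≤ a i ∧ a i ≤ n ∧ a i ≠ h) ∧
    (∀ i c, 2 ≤ i → i ≤ n → 2 ≤ c → c ≤ n → a i = a c → i = c)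

theorem Good.image {n : ℕ} {a : ℕ → ℕ} {h : ℕ} (g : Good n a h) :
    (Finset.Icc 2 n).image a = (Finset.Icc 1 n).erase h := by
  obtain ⟨h1, h2, h3, h4⟩ := g
  apply Finset.eq_of_subset_of_card_le
  · intro x hx
    simp only [Finset.mem_image, Finset.mem_Icc, Finset.mem_erase] at hx ⊢
    obtain ⟨i, hi, rfl⟩ := hx
    have := h3 i hi.1 hi.2
    exact ⟨this.2.2, this.1, this.2.1⟩
  · rw [Finset.card_image_of_injOn, Finset.card_erase_of_mem]
    · simp
    · simp [h1, h2]
    · intro i hi c hc e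
      simp only [Finset.coe_Icc, Set.mem_Icc] at hi hc
      exact h4 i c hi.1 hi.2 hc.1 hc.2 e

/-- First element of `S` in cyclic order starting from `d`. -/
def First (d : ℕ) (S : Set ℕ) (t : ℕ) : Prop :=
  t ∈ S ∧ ((d ≤ t ∧ ∀ x ∈ S, d ≤ x → t ≤ x) ∨ ((∀ x ∈ S, x < d) ∧ ∀ x ∈ S, t ≤ x))

theorem First.unique {d : ℕ} {S : Set ℕ} {t t' : ℕ} (h : First d S t) (h' : First d S t') :
    t = t' := by
  obtain ⟨m, h⟩ := h
  obtain ⟨m', h'⟩ := h'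
  rcases h with h | h <;> rcases h' with h' | h'
  · exact le_antisymm (h.2 _ m' h'.1) (h'.2 _ m h.1)
  · have := h'.1 _ m; omega
  · have := h.1 _ m'; omega
  · exact le_antisymm (h.2 _ m') (h'.2 _ m)

theorem first_iff (d : ℕ) (S : Set ℕ) (t : ℕ) (ht : t ∈ S) :
    ((({x ∈ S | d ≤ x}.Nonempty → t = sInf {x ∈ S | d ≤ x}) ∧
      (¬ {x ∈ S | d ≤ x}.Nonempty → t = sInf S))) ↔ First d S t := by
  constructor
  · rintro ⟨h1, h2⟩
    refine ⟨ht, ?_⟩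
    by_cases hne : {x ∈ S | d ≤ x}.Nonempty
    · left
      have h := h1 hne
      have hm := Nat.sInf_mem hne
      rw [← h] at hm
      refine ⟨hm.2, fun x hx hdx => ?_⟩
      rw [h]
      exact Nat.sInf_le ⟨hx, hdx⟩
    · right
      have h := h2 hne
      refine ⟨fun x hx => ?_, fun x hx => ?_⟩
      · by_contra hc
        exact hne ⟨x, hx, not_lt.mp hc⟩
      · rw [h]; exact Nat.sInf_le hx
  · intro hf
    by_cases hne : {x ∈ S | d ≤ x}.Nonempty
    · refine ⟨fun _ => ?_, fun h => absurd hne h⟩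
      have hm := Nat.sInf_mem hne
      refine hf.unique ⟨hm.1, Or.inl ⟨hm.2, fun x hx hd => Nat.sInf_le ⟨hx, hd⟩⟩⟩
    · refine ⟨fun h => absurd h hne, fun _ => ?_⟩
      refine hf.unique ⟨Nat.sInf_mem ⟨t, ht⟩, Or.inr ⟨fun x hx => ?_, fun x hx => Nat.sInf_le hx⟩⟩
      by_contra hc
      exact hne ⟨x, hx, not_lt.mp hc⟩

/-- Next element of `S` strictly after `x`, cyclically. -/
noncomputable def cyc (S : Set ℕ) (x : ℕ) : ℕ := by
  classical
  exact if ∃ y ∈ S, x < y then sInf {y | y ∈ S ∧ x < y} else sInf S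

theorem cyc_spec (S : Set ℕ) (x : ℕ) (hS : S.Nonempty) :
    cyc S x ∈ S ∧ ((x < cyc S x ∧ ∀ y ∈ S, x < y → cyc S x ≤ y) ∨
      ((∀ y ∈ S, y ≤ x) ∧ ∀ y ∈ S, cyc S x ≤ y)) := by
  classical
  by_cases h : ∃ y ∈ S, x < y
  · have e : cyc S x = sInf {y | y ∈ S ∧ x < y} := by simp only [cyc]; rw [if_pos h]
    rw [e]
    have hm : sInf {y | y ∈ S ∧ x < y} ∈ {y | y ∈ S ∧ x < y} := Nat.sInf_mem h
    exact ⟨hm.1, Or.inl ⟨hm.2, fun y hy hxy => Nat.sInf_le ⟨hy, hxy⟩⟩⟩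
  · have e : cyc S x = sInf S := by simp only [cyc]; rw [if_neg h]
    rw [e]
    refine ⟨Nat.sInf_mem hS, Or.inr ⟨fun y hy => ?_, fun y hy => Nat.sInf_le hy⟩⟩
    by_contra hc
    exact h ⟨y, hy, not_le.mp hc⟩

/-- Hole and the first values. -/
def U (a : ℕ → ℕ) (h i : ℕ) : Set ℕ := {x | x = h ∨ ∃ c, 2 ≤ c ∧ c ≤ i ∧ a c = x}

/-- Holes going from the right to the left. -/
noncomputable def ee (n : ℕ) (a : ℕ → ℕ) (h b : ℕ) : ℕ → ℕ
  | 0 => b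
  | t + 1 => if ee n a h b t = a (n - t) then cyc (U a h (n - t - 1)) (ee n a h b t)
      else ee n a h b t

noncomputable def hol (n : ℕ) (a : ℕ → ℕ) (h b i : ℕ) : ℕ := ee n a h b (n - i)

noncomputable def nextRow (n : ℕ) (a : ℕ → ℕ) (h b i : ℕ) : ℕ :=
  if hol n a h b i = a i then hol n a h b (i - 1) else a i

theorem hol_top (n : ℕ) (a : ℕ → ℕ) (h b : ℕ) : hol n a h b n = b := by
  simp [hol, ee]

theorem hol_step (n : ℕ) (a : ℕ → ℕ) (h b i : ℕ) (hi : i + 1 ≤ n) :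
    hol n a h b i = if hol n a h b (i + 1) = a (i + 1) then
      cyc (U a h i) (hol n a h b (i + 1)) else hol n a h b (i + 1) := by
  have e : n - i = (n - (i + 1)) + 1 := by omega
  have e2 : n - (n - (i + 1)) = i + 1 := by omega
  rw [hol, e, ee, e2]
  rfl

theorem U_succ (a : ℕ → ℕ) (h i : ℕ) (hi : 1 ≤ i) (x : ℕ) :
    x ∈ U a h (i + 1) ↔ x ∈ U a h i ∨ x = a (i + 1) := by
  constructor
  · rintro (rfl | ⟨c, h1, h2, rfl⟩)
    · exact Or.inl (Or.inl rfl)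
    · rcases Nat.lt_or_ge c (i + 1) with h | h
      · exact Or.inl (Or.inr ⟨c, h1, by omega, rfl⟩)
      · right; congr 1; omega
  · rintro ((rfl | ⟨c, h1, h2, rfl⟩) | rfl)
    · exact Or.inl rfl
    · exact Or.inr ⟨c, h1, by omega, rfl⟩
    · exact Or.inr ⟨i + 1, by omega, le_refl _, rfl⟩

theorem U_ne (a : ℕ → ℕ) (h i : ℕ) : (U a h i).Nonempty := ⟨h, Or.inl rfl⟩

theorem U_one (a : ℕ → ℕ) (h x : ℕ) : x ∈ U a h 1 ↔ x = h := by
  constructor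
  · rintro (rfl | ⟨c, h1, h2, rfl⟩)
    · rfl
    · omega
  · exact Or.inl

theorem Good.U_top {n : ℕ} {a : ℕ → ℕ} {h : ℕ} (g : Good n a h) (x : ℕ) :
    x ∈ U a h n ↔ 1 ≤ x ∧ x ≤ n := by
  have him := g.image
  constructor
  · rintro (rfl | ⟨c, h1, h2, rfl⟩)
    · exact ⟨g.1, g.2.1⟩
    · have := g.2.2.1 c h1 h2; omega
  · intro hx
    by_cases e : x = h
    · exact Or.inl e
    · have : x ∈ (Finset.Icc 2 n).image a := by rw [him]; simp [e, hx]
      simp only [Finset.mem_image, Finset.mem_Icc] at this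
      obtain ⟨c, hc, e⟩ := this
      exact Or.inr ⟨c, hc.1, hc.2, e⟩

/-- `a (i+1)` is not in `U i`. -/
theorem Good.not_mem {n : ℕ} {a : ℕ → ℕ} {h : ℕ} (g : Good n a h) (i : ℕ) (hi : 1 ≤ i)
    (hin : i + 1 ≤ n) : a (i + 1) ∉ U a h i := by
  rintro (e | ⟨c, h1, h2, e⟩)
  · exact (g.2.2.1 (i + 1) (by omega) hin).2.2 e
  · have := g.2.2.2 c (i + 1) h1 (by omega) (by omega) hin e
    omega

theorem hol_mem {n : ℕ} {a : ℕ → ℕ} {h b : ℕ} (g : Good n a h) (hb : 1 ≤ b ∧ b ≤ n) :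
    ∀ i, 1 ≤ i → i ≤ n → hol n a h b i ∈ U a h i := by
  have key : ∀ t i, i + t = n → 1 ≤ i → hol n a h b i ∈ U a h i := by
    intro t
    induction t with
    | zero =>
      intro i hi h1
      obtain rfl : i = n := by omega
      rw [hol_top, g.U_top]; exact hb
    | succ t ih =>
      intro i hi h1
      have := ih (i + 1) (by omega) (by omega)
      rw [hol_step n a h b i (by omega)]
      split_ifs with e
      · exact (cyc_spec _ _ (U_ne a h i)).1
      · rw [U_succ _ _ _ h1] at this
        exact this.resolve_right e
  intro i h1 h2
  exact key (n - i) i (by omega) h1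

theorem hol_one {n : ℕ} {a : ℕ → ℕ} {h b : ℕ} (g : Good n a h) (hb : 1 ≤ b ∧ b ≤ n)
    (hn : 1 ≤ n) : hol n a h b 1 = h := by
  have := hol_mem g hb 1 le_rfl hn
  rwa [U_one] at this

theorem nextRow_set {n : ℕ} {a : ℕ → ℕ} {h b : ℕ} (g : Good n a h) (hb : 1 ≤ b ∧ b ≤ n) :
    ∀ i, 1 ≤ i → i ≤ n → ∀ x, (∃ c, 2 ≤ c ∧ c ≤ i ∧ nextRow n a h b c = x) ↔
      (x ∈ U a h i ∧ x ≠ hol n a h b i) := by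
  intro i h1
  induction i, h1 using Nat.le_induction with
  | base =>
    intro hn x
    rw [hol_one g hb hn, U_one]
    constructor
    · rintro ⟨c, h1, h2, -⟩; omega
    · rintro ⟨h1, h2⟩; exact absurd h1 h2
  | succ i h1 ih =>
    intro hn x
    have ih := ih (by omega) x
    have hs : (∃ c, 2 ≤ c ∧ c ≤ i + 1 ∧ nextRow n a h b c = x) ↔
        (∃ c, 2 ≤ c ∧ c ≤ i ∧ nextRow n a h b c = x) ∨ nextRow n a h b (i + 1) = x := by
      constructor
      · rintro ⟨c, q1, q2, q3⟩
        rcases Nat.lt_or_ge c (i + 1) with q | q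
        · exact Or.inl ⟨c, q1, by omega, q3⟩
        · obtain rfl : c = i + 1 := by omega
          exact Or.inr q3
      · rintro (⟨c, q1, q2, q3⟩ | q)
        · exact ⟨c, q1, by omega, q3⟩
        · exact ⟨i + 1, by omega, le_rfl, q⟩
    rw [hs, ih, U_succ _ _ _ h1]
    have hst := hol_step n a h b i hn
    have hnm := g.not_mem i h1 hn
    have hmi := hol_mem g hb i h1 (by omega)
    simp only [nextRow, Nat.add_sub_cancel]
    by_cases e : hol n a h b (i + 1) = a (i + 1)
    · rw [if_pos e, e]
      constructor
      · rintro (⟨q1, q2⟩ | q)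
        · exact ⟨Or.inl q1, fun q => hnm (q ▸ q1)⟩
        · exact ⟨Or.inl (q ▸ hmi), fun q' => hnm (by rw [← q', ← q]; exact hmi)⟩
      · rintro ⟨q1 | q1, q2⟩
        · by_cases q : hol n a h b i = x
          · exact Or.inr q
          · exact Or.inl ⟨q1, Ne.symm q⟩
        · exact absurd q1 q2
    · rw [if_neg e] at hst ⊢
      rw [← hst]
      constructor
      · rintro (⟨q1, q2⟩ | q)
        · exact ⟨Or.inl q1, q2⟩
        · refine ⟨Or.inr q.symm, fun q' => ?_⟩
          apply e; rw [← hst, ← q', q]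
      · rintro ⟨q1 | q1, q2⟩
        · exact Or.inl ⟨q1, q2⟩
        · exact Or.inr q1.symm

theorem nextRow_good {n : ℕ} {a : ℕ → ℕ} {h b : ℕ} (g : Good n a h) (hb : 1 ≤ b ∧ b ≤ n) :
    Good n (nextRow n a h b) b := by
  have hlt : ∀ i c, 2 ≤ i → i < c → c ≤ n → nextRow n a h b i ≠ nextRow n a h b c := by
    intro i c hi hic hc e
    obtain ⟨c, rfl⟩ : ∃ d, c = d + 1 := ⟨c - 1, by omega⟩
    have := (nextRow_set g hb c (by omega) (by omega) (nextRow n a h b (c + 1))).1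
      ⟨i, hi, by omega, e⟩
    have hnm := g.not_mem c (by omega) hc
    revert this
    rw [nextRow]
    split_ifs with q
    · simp
    · intro q; exact hnm q.1
  refine ⟨hb.1, hb.2, fun i h1 h2 => ?_, fun i c h1 h2 h3 h4 e => ?_⟩
  · have := (nextRow_set g hb n (by omega) le_rfl (nextRow n a h b i)).1 ⟨i, h1, h2, rfl⟩
    rw [g.U_top, hol_top] at this
    exact ⟨this.1.1, this.1.2, this.2⟩
  · rcases lt_trichotomy i c with q | q | q
    · exact absurd e (hlt i c h1 q h4)
    · exact q
    · exact absurd e.symm (hlt c i h3 q h2)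

/-- Transition between consecutive full rows. -/
def RowNext (n : ℕ) (a a' : ℕ → ℕ) : Prop :=
  (∀ i, 2 ≤ i → i ≤ n → First (a i) {x | ∃ c, 2 ≤ c ∧ c ≤ i ∧ a' c = x} (a' i)) ∧
    ∀ i c, 2 ≤ i → i < c → c ≤ n → a' i ≠ a c

theorem nextRow_first {n : ℕ} {a : ℕ → ℕ} {h b : ℕ} (g : Good n a h)
    (i : ℕ) (h1 : 1 ≤ i) (h2 : i + 1 ≤ n) (_e : hol n a h b (i + 1) ∈ U a h (i + 1)) :
    First (a (i + 1)) {x | x ∈ U a h (i + 1) ∧ x ≠ hol n a h b (i + 1)}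
      (nextRow n a h b (i + 1)) := by
  have hst := hol_step n a h b i h2
  have hnm := g.not_mem i h1 h2
  simp only [nextRow, Nat.add_sub_cancel]
  by_cases e : hol n a h b (i + 1) = a (i + 1)
  · rw [if_pos e] at hst ⊢
    rw [e] at hst ⊢
    rw [hst]
    have hset : {x | x ∈ U a h (i + 1) ∧ x ≠ a (i + 1)} = U a h i := by
      ext x
      simp only [Set.mem_ofPred_eq, U_succ _ _ _ h1]
      constructor
      · rintro ⟨q | q, q2⟩
        · exact q
        · exact absurd q q2
      · intro q
        exact ⟨Or.inl q, fun q' => hnm (q' ▸ q)⟩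
    rw [hset]
    obtain ⟨m, q⟩ := cyc_spec (U a h i) (a (i + 1)) (U_ne a h i)
    have hne : ∀ x ∈ U a h i, x ≠ a (i + 1) := fun x hx q' => hnm (q' ▸ hx)
    refine ⟨m, ?_⟩
    rcases q with q | q
    · left
      refine ⟨q.1.le, fun x hx hax => q.2 x hx ?_⟩
      have := hne x hx; omega
    · right
      refine ⟨fun x hx => ?_, q.2⟩
      have := hne x hx; have := q.1 x hx; omega
  · rw [if_neg e]
    refine ⟨⟨(U_succ _ _ _ h1 _).2 (Or.inr rfl), fun q => e q.symm⟩, Or.inl ⟨le_rfl, fun x _ q => q⟩⟩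

theorem nextRow_next {n : ℕ} {a : ℕ → ℕ} {h b : ℕ} (g : Good n a h) (hb : 1 ≤ b ∧ b ≤ n) :
    RowNext n a (nextRow n a h b) := by
  constructor
  · intro i h1 h2
    have hset : {x | ∃ c, 2 ≤ c ∧ c ≤ i ∧ nextRow n a h b c = x} =
        {x | x ∈ U a h i ∧ x ≠ hol n a h b i} := by
      ext x; exact nextRow_set g hb i (by omega) h2 x
    rw [hset]
    obtain ⟨i, rfl⟩ : ∃ d, i = d + 1 := ⟨i - 1, by omega⟩
    exact nextRow_first g i (by omega) h2 (hol_mem g hb _ (by omega) h2)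
  · intro i c h1 h2 h3 e
    have := ((nextRow_set g hb i (by omega) (by omega) (nextRow n a h b i)).1
      ⟨i, h1, le_rfl, rfl⟩).1
    rw [e] at this
    rcases this with q | ⟨d, q1, q2, q3⟩
    · exact (g.2.2.1 c (by omega) h3).2.2 q
    · have := g.2.2.2 d c q1 (by omega) (by omega) h3 q3
      omega

theorem nextRow_unique {n : ℕ} {a a' : ℕ → ℕ} {h b : ℕ} (g : Good n a h) (g' : Good n a' b)
    (hr : RowNext n a a') : ∀ i, 2 ≤ i → i ≤ n → a' i = nextRow n a h b i := by
  have hb : 1 ≤ b ∧ b ≤ n := ⟨g'.1, g'.2.1⟩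
  have key : ∀ t i, i + t = n → 1 ≤ i →
      ({x | ∃ c, 2 ≤ c ∧ c ≤ i ∧ a' c = x} = {x | x ∈ U a h i ∧ x ≠ hol n a h b i}) ∧
      ∀ c, i < c → c ≤ n → a' c = nextRow n a h b c := by
    intro t
    induction t with
    | zero =>
      intro i hi h1
      obtain rfl : i = n := by omega
      refine ⟨?_, fun c q1 q2 => by omega⟩
      ext x
      rw [hol_top, Set.mem_ofPred_eq, Set.mem_ofPred_eq, g.U_top, ← g'.U_top]
      constructor
      · rintro ⟨c, q1, q2, q3⟩
        exact ⟨Or.inr ⟨c, q1, q2, q3⟩, fun q => (g'.2.2.1 c q1 q2).2.2 (q3.trans q)⟩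
      · rintro ⟨q | q, q'⟩
        · exact absurd q q'
        · exact q
    | succ t ih =>
      intro i hi h1
      obtain ⟨ih1, ih2⟩ := ih (i + 1) (by omega) (by omega)
      have hf := hr.1 (i + 1) (by omega) (by omega)
      rw [ih1] at hf
      have hf' := nextRow_first (b := b) g i h1 (by omega) (hol_mem g hb _ (by omega) (by omega))
      have heq := hf.unique hf'
      refine ⟨?_, fun c q1 q2 => ?_⟩
      · have s1 : {x | ∃ c, 2 ≤ c ∧ c ≤ i ∧ a' c = x} =
            {x | (∃ c, 2 ≤ c ∧ c ≤ i + 1 ∧ a' c = x) ∧ x ≠ a' (i + 1)} := by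
          ext x
          constructor
          · rintro ⟨c, q1, q2, rfl⟩
            refine ⟨⟨c, q1, by omega, rfl⟩, fun q => ?_⟩
            have := g'.2.2.2 c (i + 1) q1 (by omega) (by omega) (by omega) q
            omega
          · rintro ⟨⟨c, q1, q2, rfl⟩, q⟩
            refine ⟨c, q1, ?_, rfl⟩
            rcases Nat.lt_or_ge c (i + 1) with r | r
            · omega
            · obtain rfl : c = i + 1 := by omega
              exact absurd rfl q
        have s2 : ∀ x, (∃ c, 2 ≤ c ∧ c ≤ i + 1 ∧ a' c = x) ↔
            x ∈ U a h (i + 1) ∧ x ≠ hol n a h b (i + 1) := fun x => by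
          have := congrArg (fun S : Set ℕ => x ∈ S) ih1
          simpa using this
        rw [s1]
        ext x
        have hn' := nextRow_set g hb (i + 1) (by omega) (by omega) x
        have hn := nextRow_set g hb i (by omega) (by omega) x
        rw [Set.mem_ofPred_eq, Set.mem_ofPred_eq, s2, ← hn', ← hn, heq]
        have gn := nextRow_good g hb
        constructor
        · rintro ⟨⟨c, q1, q2, rfl⟩, q⟩
          refine ⟨c, q1, ?_, rfl⟩
          rcases Nat.lt_or_ge c (i + 1) with r | r
          · omega
          · obtain rfl : c = i + 1 := by omega
            exact absurd rfl q
        · rintro ⟨c, q1, q2, rfl⟩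
          refine ⟨⟨c, q1, by omega, rfl⟩, fun q => ?_⟩
          have := gn.2.2.2 c (i + 1) q1 (by omega) (by omega) (by omega) q
          omega
      · rcases Nat.lt_or_ge (i + 1) c with r | r
        · exact ih2 c r q2
        · obtain rfl : c = i + 1 := by omega
          exact heq
  intro i h1 h2
  exact (key (n - 1) 1 (by omega) le_rfl).2 i (by omega) h2

theorem wraps {n : ℕ} {a : ℕ → ℕ} {h b : ℕ} (g : Good n a h) (hb : 1 ≤ b ∧ b ≤ n) (m : ℕ) :
    ∀ i, 1 ≤ i → i ≤ n → (∑ c ∈ Finset.Icc 2 i, if nextRow n a h b c < a c then m else 0) =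
      if h < hol n a h b i then m else 0 := by
  intro i h1
  induction i, h1 using Nat.le_induction with
  | base =>
    intro hn
    rw [hol_one g hb hn]; simp
  | succ i h1 ih =>
    intro hn
    rw [Finset.sum_Icc_succ_top (by omega), ih (by omega)]
    have hst := hol_step n a h b i hn
    have hnm := g.not_mem i h1 hn
    have hmi := hol_mem g hb i h1 (by omega)
    simp only [nextRow, Nat.add_sub_cancel]
    by_cases e : hol n a h b (i + 1) = a (i + 1)
    · rw [if_pos e] at hst
      rw [if_pos e]
      rw [e] at hst ⊢
      have hh : h ∈ U a h i := Or.inl rfl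
      have hne : h ≠ a (i + 1) := fun q => hnm (q ▸ hh)
      obtain ⟨m, q⟩ := cyc_spec (U a h i) (a (i + 1)) (U_ne a h i)
      rw [← hst] at m q
      have hne2 : hol n a h b i ≠ a (i + 1) := fun q => hnm (q ▸ m)
      rcases q with q | q
      · rw [if_neg (by omega : ¬ hol n a h b i < a (i + 1))]
        have := q.2 h hh
        by_cases r : h < a (i + 1)
        · rw [if_pos r, if_pos (by omega)]; rfl
        · rw [if_neg r, if_neg (by omega)]
      · have r1 := q.1 _ m
        have r2 := q.1 _ hh
        have r3 := q.2 _ hh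
        rw [if_neg (by omega), if_pos (by omega), if_pos (by omega), zero_add]
    · rw [if_neg e] at hst
      rw [if_neg e, hst]; simp

end CO

namespace CO

theorem mem_dgF (n : ℕ) (mu : ℕ → ℕ) (u : ℕ × ℕ) :
    u ∈ dgF n mu ↔ 1 ≤ u.1 ∧ u.1 ≤ n ∧ 1 ≤ u.2 ∧ u.2 ≤ mu u.1 := by
  obtain ⟨i, j⟩ := u
  simp only [dgF, Finset.mem_biUnion, Finset.mem_image, Finset.mem_Icc, Prod.mk.injEq]
  constructor
  · rintro ⟨i', h1, j', h2, rfl, rfl⟩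
    exact ⟨h1.1, h1.2, h2.1, h2.2⟩
  · rintro ⟨h1, h2, h3, h4⟩
    exact ⟨i, ⟨h1, h2⟩, j, ⟨h3, h4⟩, rfl, rfl⟩

theorem mem_dg_lam {n : ℕ} (hn : 3 ≤ n) (m1 m : ℕ) (i j : ℕ) :
    (i, j) ∈ dgF n (lamF n m1 m) ↔
      2 ≤ i ∧ i ≤ n ∧ 1 ≤ j ∧ (j ≤ m ∨ (i = n ∧ j ≤ m1 + m)) := by
  rw [mem_dgF]
  simp only [lamF]
  split_ifs <;> omega

theorem mem_arm_lam {n : ℕ} (hn : 3 ≤ n) (m1 m : ℕ) (i j c d : ℕ)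
    (hu : (i, j) ∈ dgF n (lamF n m1 m)) :
    (c, d) ∈ armF n (lamF n m1 m) (i, j) ↔ 2 ≤ c ∧ c < i ∧ d = j ∧ j ≤ m := by
  rw [mem_dg_lam hn] at hu
  simp only [armF, Finset.mem_union, Finset.mem_filter, mem_dg_lam hn, augF, Finset.mem_image,
    Finset.mem_Icc, Prod.mk.injEq]
  constructor
  · rintro (h | ⟨h0, h1, h2, h3⟩)
    · omega
    · exfalso
      have hc : c ≤ n := by
        rcases h0 with h0 | ⟨x, hx, rfl, -⟩
        · exact h0.2.1
        · exact hx.2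
      simp only [lamF] at h3
      revert h3
      split_ifs <;> omega
  · rintro ⟨h1, h2, h3, h4⟩
    left
    refine ⟨by omega, h2, h3, ?_⟩
    simp only [lamF]
    split_ifs <;> omega

theorem dg_sum {M : Type*} [AddCommMonoid M] (n : ℕ) (mu : ℕ → ℕ) (g : ℕ × ℕ → M) :
    ∑ u ∈ dgF n mu, g u = ∑ i ∈ Finset.Icc 1 n, ∑ t ∈ Finset.range (mu i), g (i, t + 1) := by
  rw [dgF, Finset.sum_biUnion]
  · apply Finset.sum_congr rfl
    intro i _
    rw [Finset.sum_image (by intro x _ y _ h; simpa using h)]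
    symm
    apply Finset.sum_nbij (fun t => t + 1)
    · intro t ht; simp only [Finset.mem_range, Finset.mem_Icc] at *; omega
    · intro x _ y _ h; simpa using h
    · intro t ht
      simp only [Finset.coe_Icc, Set.mem_Icc] at ht
      exact ⟨t - 1, by simp only [Finset.coe_range, Set.mem_Iio]; omega, by simp only []; omega⟩
    · intro t _; rfl
  · intro i _ i' _ hne
    rw [Function.onFun, Finset.disjoint_left]
    intro x hx hx'
    simp only [Finset.mem_image] at hx hx'
    obtain ⟨j, _, rfl⟩ := hx
    obtain ⟨j', _, e⟩ := hx'
    simp only [Prod.mk.injEq] at e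
    exact hne e.1.symm

theorem lamF_succ (n m1 m i : ℕ) (hi : 2 ≤ i) : lamF n m1 (m + 1) i = lamF n m1 m i + 1 := by
  simp only [lamF]; split_ifs <;> omega

theorem lamF_one {n : ℕ} (hn : 3 ≤ n) (m1 m : ℕ) : lamF n m1 m 1 = 0 := by
  simp only [lamF]; split_ifs <;> omega

theorem sum_Icc_one {M : Type*} [AddCommMonoid M] (n : ℕ) (hn : 3 ≤ n) (f : ℕ → M) :
    ∑ i ∈ Finset.Icc 1 n, f i = f 1 + ∑ i ∈ Finset.Icc 2 n, f i := by
  rw [← Finset.insert_Icc_add_one_left_eq_Icc (by omega : 1 ≤ n), Finset.sum_insert (by simp)]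
  rfl

theorem dg_sum_succ {M : Type*} [AddCommMonoid M] {n : ℕ} (hn : 3 ≤ n) (m1 m : ℕ)
    (g : ℕ × ℕ → M) :
    ∑ u ∈ dgF n (lamF n m1 (m + 1)), g u =
      ∑ i ∈ Finset.Icc 2 n, g (i, 1) + ∑ u ∈ dgF n (lamF n m1 m), g (u.1, u.2 + 1) := by
  rw [dg_sum, dg_sum, sum_Icc_one n hn, sum_Icc_one n hn, lamF_one hn, lamF_one hn]
  simp only [Finset.range_zero, Finset.sum_empty, zero_add]
  rw [← Finset.sum_add_distrib]
  apply Finset.sum_congr rfl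
  intro i hi
  rw [Finset.mem_Icc] at hi
  rw [lamF_succ _ _ _ _ hi.1, Finset.sum_range_succ', add_comm]

def down (τ : ℕ × ℕ → ℕ) : ℕ × ℕ → ℕ := fun u => if u.2 = 0 then 0 else τ (u.1, u.2 + 1)

def up (n : ℕ) (a : ℕ → ℕ) (τ : ℕ × ℕ → ℕ) : ℕ × ℕ → ℕ := fun u =>
  if u.2 = 0 then 0 else if u.2 = 1 then (if 2 ≤ u.1 ∧ u.1 ≤ n then a u.1 else 0)
    else τ (u.1, u.2 - 1)

/-- Conditions without the bottom row. -/
def NR (n : ℕ) (mu : ℕ → ℕ) (k : ℕ → ℕ) (τ : ℕ × ℕ → ℕ) : Prop :=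
  (∀ u ∈ dgF n mu, 1 ≤ τ u ∧ τ u ≤ n) ∧
    (∀ u ∈ dgF n mu, ∀ v ∈ dgF n mu, Attack u v → τ u ≠ τ v) ∧
    GreedyRule n mu τ ∧
    ∀ i, 1 ≤ i → i ≤ n → ((dgF n mu).filter fun u => τ u = i).card = k i

theorem ccond_iff (n : ℕ) (mu a k : ℕ → ℕ) (τ : ℕ × ℕ → ℕ) :
    CCond n mu a k τ ↔ NR n mu k τ ∧ ∀ j, (j, 1) ∈ dgF n mu → τ (j, 1) = a j := by
  simp only [CCond, NR]; tauto

theorem greedy_iff {n : ℕ} (hn : 3 ≤ n) (m1 m : ℕ) (τ : ℕ × ℕ → ℕ) :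
    GreedyRule n (lamF n m1 m) τ ↔ ∀ i j, 2 ≤ i → i ≤ n → 2 ≤ j → j ≤ m →
      First (τ (i, j - 1)) {x | ∃ c, 2 ≤ c ∧ c ≤ i ∧ τ (c, j) = x} (τ (i, j)) := by
  have hset : ∀ i j, (i, j) ∈ dgF n (lamF n m1 m) → j ≤ m →
      τ '' ↑(armF n (lamF n m1 m) (i, j)) ∪ {τ (i, j)} =
        {x | ∃ c, 2 ≤ c ∧ c ≤ i ∧ τ (c, j) = x} := by
    intro i j hu hj
    ext x
    simp only [Set.mem_union, Set.mem_image, Finset.mem_coe, Set.mem_singleton_iff,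
      Set.mem_ofPred_eq, Prod.exists]
    constructor
    · rintro (⟨c, d, h1, rfl⟩ | rfl)
      · rw [mem_arm_lam hn _ _ _ _ _ _ hu] at h1
        obtain ⟨q1, q2, rfl, q3⟩ := h1
        exact ⟨c, q1, q2.le, rfl⟩
      · rw [mem_dg_lam hn] at hu
        exact ⟨i, hu.1, le_rfl, rfl⟩
    · rintro ⟨c, q1, q2, rfl⟩
      rcases Nat.lt_or_ge c i with r | r
      · left
        exact ⟨c, j, (mem_arm_lam hn _ _ _ _ _ _ hu).2 ⟨q1, r, rfl, hj⟩, rfl⟩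
      · right
        obtain rfl : c = i := by omega
        rfl
  constructor
  · intro hg i j h1 h2 h3 h4
    have hu : (i, j) ∈ dgF n (lamF n m1 m) := by rw [mem_dg_lam hn]; omega
    have := hg (i, j) hu h3
    rw [first_iff _ _ _ (Or.inr rfl), hset i j hu h4] at this
    exact this
  · rintro h ⟨i, j⟩ hu h3
    rw [first_iff _ _ _ (Or.inr rfl)]
    have hu' := hu
    rw [mem_dg_lam hn] at hu'
    by_cases hj : j ≤ m
    · rw [hset i j hu hj]
      exact h i j hu'.1 hu'.2.1 h3 hj
    · have he : τ '' ↑(armF n (lamF n m1 m) (i, j)) ∪ {τ (i, j)} = {τ (i, j)} := by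
        have : armF n (lamF n m1 m) (i, j) = ∅ := by
          rw [Finset.eq_empty_iff_forall_notMem]
          rintro ⟨c, d⟩ hc
          rw [mem_arm_lam hn _ _ _ _ _ _ hu] at hc
          omega
        rw [this]; simp
      rw [he]
      refine ⟨rfl, ?_⟩
      rcases Nat.lt_or_ge (τ (i, j)) (τ (dbox (i, j))) with q | q
      · right
        simp [q]
      · left
        simp [q]

theorem attack_iff {n : ℕ} (hn : 3 ≤ n) (m1 m : ℕ) (τ : ℕ × ℕ → ℕ) :
    (∀ u ∈ dgF n (lamF n m1 m), ∀ v ∈ dgF n (lamF n m1 m), Attack u v → τ u ≠ τ v) ↔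
      (∀ i c j, 2 ≤ i → i < c → c ≤ n → 1 ≤ j → j ≤ m → τ (i, j) ≠ τ (c, j)) ∧
      (∀ i c j, 2 ≤ i → i < c → c ≤ n → 1 ≤ j → j + 1 ≤ m → τ (i, j + 1) ≠ τ (c, j)) := by
  constructor
  · intro h
    refine ⟨fun i c j h1 h2 h3 h4 h5 => ?_, fun i c j h1 h2 h3 h4 h5 => ?_⟩
    · apply h
      · rw [mem_dg_lam hn]; omega
      · rw [mem_dg_lam hn]; omega
      · refine ⟨?_, Or.inl rfl⟩
        simp only [ne_eq, Prod.mk.injEq]; omega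
    · apply h
      · rw [mem_dg_lam hn]; omega
      · rw [mem_dg_lam hn]; omega
      · refine ⟨?_, Or.inr (Or.inl ⟨rfl, h2⟩)⟩
        simp only [ne_eq, Prod.mk.injEq]; omega
  · rintro ⟨hA, hB⟩ ⟨i, j⟩ hu ⟨c, d⟩ hv ⟨hne, hatt⟩
    rw [mem_dg_lam hn] at hu hv
    simp only [ne_eq, Prod.mk.injEq] at hne
    simp only at hatt
    rcases hatt with rfl | ⟨rfl, h2⟩ | ⟨rfl, h2⟩
    · rcases Nat.lt_or_ge i c with q | q
      · exact hA i c j hu.1 q hv.2.1 hu.2.2.1 (by omega)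
      · exact (hA c i j hv.1 (by omega) hu.2.1 hu.2.2.1 (by omega)).symm
    · exact hB i c d hu.1 h2 hv.2.1 hv.2.2.1 (by omega)
    · exact (hB c i j hv.1 h2 hu.2.1 hu.2.2.1 (by omega)).symm

theorem down_pos (τ : ℕ × ℕ → ℕ) (i j : ℕ) (hj : 1 ≤ j) : down τ (i, j) = τ (i, j + 1) := by
  simp only [down]; rw [if_neg (by omega)]

theorem row_count {n : ℕ} {a : ℕ → ℕ} {h : ℕ} (g : Good n a h) (x : ℕ) (hx : 1 ≤ x ∧ x ≤ n) :
    (∑ i ∈ Finset.Icc 2 n, if a i = x then 1 else 0) = if x = h then 0 else 1 := by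
  rw [← Finset.sum_image (s := Finset.Icc 2 n) (g := a) (f := fun y => if y = x then 1 else 0)]
  · rw [g.image, Finset.sum_ite_eq']
    simp [hx]
  · intro i hi c hc e
    simp only [Finset.coe_Icc, Set.mem_Icc] at hi hc
    exact g.2.2.2 i c hi.1 hi.2 hc.1 hc.2 e

theorem count_succ {n : ℕ} (hn : 3 ≤ n) (m1 m : ℕ) {a : ℕ → ℕ} {h : ℕ} (g : Good n a h)
    (τ : ℕ × ℕ → ℕ) (ha : ∀ i, 2 ≤ i → i ≤ n → τ (i, 1) = a i) (x : ℕ) (hx : 1 ≤ x ∧ x ≤ n) :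
    ((dgF n (lamF n m1 (m + 1))).filter fun u => τ u = x).card =
      ((dgF n (lamF n m1 m)).filter fun u => down τ u = x).card + if x = h then 0 else 1 := by
  rw [Finset.card_filter, Finset.card_filter, dg_sum_succ hn, ← row_count g x hx, add_comm]
  congr 1
  · apply Finset.sum_congr rfl
    rintro ⟨i, j⟩ hu
    rw [mem_dgF] at hu
    rw [down_pos _ _ _ hu.2.2.1]
  · apply Finset.sum_congr rfl
    intro i hi
    rw [Finset.mem_Icc] at hi
    rw [ha i hi.1 hi.2]

theorem key_iff {n : ℕ} (hn : 3 ≤ n) (m1 m : ℕ) {a : ℕ → ℕ} {h : ℕ} (g : Good n a h)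
    (k K : ℕ → ℕ) (hK : ∀ i, 1 ≤ i → i ≤ n → K i = k i + if i = h then 0 else 1)
    (τ : ℕ × ℕ → ℕ) (ha : ∀ i, 2 ≤ i → i ≤ n → τ (i, 1) = a i) :
    NR n (lamF n m1 (m + 1)) K τ ↔ NR n (lamF n m1 m) k (down τ) ∧
      (1 ≤ m → RowNext n a (fun i => down τ (i, 1))) := by
  have hc : (∀ i, 1 ≤ i → i ≤ n →
        ((dgF n (lamF n m1 (m + 1))).filter fun u => τ u = i).card = K i) ↔
      (∀ i, 1 ≤ i → i ≤ n →
        ((dgF n (lamF n m1 m)).filter fun u => down τ u = i).card = k i) := by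
    apply forall_congr'; intro i
    apply forall_congr'; intro h1
    apply forall_congr'; intro h2
    rw [count_succ hn m1 m g τ ha i ⟨h1, h2⟩, hK i h1 h2]
    omega
  have hr : (∀ u ∈ dgF n (lamF n m1 (m + 1)), 1 ≤ τ u ∧ τ u ≤ n) ↔
      (∀ u ∈ dgF n (lamF n m1 m), 1 ≤ down τ u ∧ down τ u ≤ n) := by
    constructor
    · rintro H ⟨i, j⟩ hu
      rw [mem_dg_lam hn] at hu
      rw [down_pos _ _ _ hu.2.2.1]
      apply H
      rw [mem_dg_lam hn]; omega
    · rintro H ⟨i, j⟩ hu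
      rw [mem_dg_lam hn] at hu
      by_cases hj : j = 1
      · subst hj
        rw [ha i hu.1 hu.2.1]
        have := g.2.2.1 i hu.1 hu.2.1
        exact ⟨this.1, this.2.1⟩
      · have := H (i, j - 1) (by rw [mem_dg_lam hn]; omega)
        rw [down_pos _ _ _ (by omega)] at this
        rwa [show j - 1 + 1 = j by omega] at this
  unfold NR
  rw [hc, hr, attack_iff hn, attack_iff hn, greedy_iff hn, greedy_iff hn]
  constructor
  · rintro ⟨h1, ⟨h2, h3⟩, h4, h5⟩
    refine ⟨⟨h1, ⟨fun i c j q1 q2 q3 q4 q5 => ?_, fun i c j q1 q2 q3 q4 q5 => ?_⟩,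
      fun i j q1 q2 q3 q4 => ?_, h5⟩, fun hm => ⟨fun i q1 q2 => ?_, fun i c q1 q2 q3 => ?_⟩⟩
    · rw [down_pos _ _ _ q4, down_pos _ _ _ q4]
      exact h2 i c (j + 1) q1 q2 q3 (by omega) (by omega)
    · rw [down_pos _ _ _ q4, down_pos _ _ _ (by omega)]
      exact h3 i c (j + 1) q1 q2 q3 (by omega) (by omega)
    · have := h4 i (j + 1) q1 q2 (by omega) (by omega)
      simp only [down_pos τ _ j (by omega)]
      rw [down_pos _ _ _ (by omega), show j - 1 + 1 = j + 1 - 1 by omega]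
      exact this
    · have := h4 i 2 q1 q2 (by omega) (by omega)
      simp only [down_pos τ _ 1 (by omega)]
      rw [← ha i q1 q2]
      exact this
    · simp only [down_pos τ _ 1 (by omega)]
      rw [← ha c (by omega) q3]
      exact h3 i c 1 q1 q2 q3 (by omega) (by omega)
  · rintro ⟨⟨h1, ⟨h2, h3⟩, h4, h5⟩, h6⟩
    refine ⟨h1, ⟨fun i c j q1 q2 q3 q4 q5 => ?_, fun i c j q1 q2 q3 q4 q5 => ?_⟩,
      fun i j q1 q2 q3 q4 => ?_, h5⟩
    · by_cases hj : j = 1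
      · subst hj
        rw [ha i (by omega) (by omega), ha c (by omega) q3]
        intro e
        have := g.2.2.2 i c (by omega) (by omega) (by omega) q3 e
        omega
      · obtain ⟨j, rfl⟩ : ∃ d, j = d + 1 := ⟨j - 1, by omega⟩
        have := h2 i c j q1 q2 q3 (by omega) (by omega)
        rwa [down_pos _ _ _ (by omega), down_pos _ _ _ (by omega)] at this
    · by_cases hj : j = 1
      · subst hj
        have := (h6 (by omega)).2 i c q1 q2 q3
        rw [ha c (by omega) q3]
        simpa only [down_pos τ _ 1 (by omega)] using this
      · obtain ⟨j, rfl⟩ : ∃ d, j = d + 1 := ⟨j - 1, by omega⟩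
        have := h3 i c j q1 q2 q3 (by omega) (by omega)
        rwa [down_pos _ _ _ (by omega), down_pos _ _ _ (by omega)] at this
    · by_cases hj : j = 2
      · subst hj
        have := (h6 (by omega)).1 i q1 q2
        simp only [down_pos τ _ 1 (by omega)] at this
        rw [show 2 - 1 = 1 from rfl, ha i q1 q2]
        exact this
      · obtain ⟨j, rfl⟩ : ∃ d, j = d + 1 := ⟨j - 1, by omega⟩
        have := h4 i j q1 q2 (by omega) (by omega)
        simp only [down_pos τ _ j (by omega)] at this
        rw [down_pos _ _ _ (by omega), show j - 1 + 1 = j + 1 - 1 by omega] at this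
        exact this

/-- Weight of the transition between the two bottom rows. -/
def rowW (n m1 m : ℕ) (a a' : ℕ → ℕ) : ℕ :=
  ∑ i ∈ Finset.Icc 2 n, if a' i < a i then lamF n m1 m i else 0

theorem asc_succ {n : ℕ} (hn : 3 ≤ n) (m1 m : ℕ) {a : ℕ → ℕ}
    (τ : ℕ × ℕ → ℕ) (ha : ∀ i, 2 ≤ i → i ≤ n → τ (i, 1) = a i) :
    ascStat n (lamF n m1 (m + 1)) τ =
      ascStat n (lamF n m1 m) (down τ) + rowW n m1 m a (fun i => down τ (i, 1)) := by
  rw [ascStat, ascStat, Finset.sum_filter, Finset.sum_filter, dg_sum_succ hn, rowW]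
  have e0 : (∑ i ∈ Finset.Icc 2 n, if 2 ≤ (i, 1).2 ∧ τ (i, 1) < τ (dbox (i, 1)) then
      lamF n m1 (m + 1) (i, 1).1 - (i, 1).2 + 1 else 0) = 0 := by simp
  rw [e0, zero_add, dg_sum, dg_sum, sum_Icc_one n hn, sum_Icc_one n hn, lamF_one hn]
  simp only [Finset.range_zero, Finset.sum_empty, zero_add]
  rw [← Finset.sum_add_distrib]
  apply Finset.sum_congr rfl
  intro i hi
  rw [Finset.mem_Icc] at hi
  rw [lamF_succ _ _ _ _ hi.1]
  rcases Nat.eq_zero_or_pos (lamF n m1 m i) with hz | hz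
  · simp [hz]
  · obtain ⟨L, hL⟩ : ∃ L, lamF n m1 m i = L + 1 := ⟨lamF n m1 m i - 1, by omega⟩
    rw [hL, Finset.sum_range_succ', Finset.sum_range_succ']
    have h1 := ha i hi.1 hi.2
    have : ∀ t, down τ (i, t + 1) = τ (i, t + 1 + 1) := fun t => down_pos _ _ _ (by omega)
    simp [this, dbox, h1]

end CO

namespace CO

open Classical in
/-- Fillings supported on the diagram. -/
noncomputable def fill (n : ℕ) (mu : ℕ → ℕ) : Finset (ℕ × ℕ → ℕ) :=
  (Fintype.piFinset fun _ : {u // u ∈ dgF n mu} => Finset.Icc 1 n).image (ext n mu)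

theorem ext_inj (n : ℕ) (mu : ℕ → ℕ) : Function.Injective (ext n mu) := by
  intro f f' e
  funext ⟨u, hu⟩
  have := congrFun e u
  simpa [ext, hu] using this

theorem mem_fill (n : ℕ) (mu : ℕ → ℕ) (τ : ℕ × ℕ → ℕ) :
    τ ∈ fill n mu ↔ (∀ u ∈ dgF n mu, 1 ≤ τ u ∧ τ u ≤ n) ∧ ∀ u, u ∉ dgF n mu → τ u = 0 := by
  simp only [fill, Finset.mem_image, Fintype.mem_piFinset, Finset.mem_Icc]
  constructor
  · rintro ⟨f, hf, rfl⟩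
    refine ⟨fun u hu => ?_, fun u hu => ?_⟩
    · simpa [ext, hu] using hf ⟨u, hu⟩
    · simp [ext, hu]
  · rintro ⟨h1, h2⟩
    refine ⟨fun u => τ u.1, fun u => h1 u.1 u.2, ?_⟩
    funext u
    by_cases hu : u ∈ dgF n mu
    · simp [ext, hu]
    · simp [ext, hu, h2 u hu]

open Classical in
theorem cCoef_eq (n : ℕ) (mu a k : ℕ → ℕ) :
    cCoef n mu a k = ∑ τ ∈ (fill n mu).filter (fun τ => CCond n mu a k τ),
      (Polynomial.X : Polynomial ℤ) ^ ascStat n mu τ := by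
  rw [fill, Finset.filter_image, Finset.sum_image (fun x _ y _ e => ext_inj n mu e), cCoef]

open Classical in
theorem peelA {n : ℕ} (hn : 3 ≤ n) (m1 m : ℕ) {a : ℕ → ℕ} {h : ℕ} (g : Good n a h)
    (k K : ℕ → ℕ) (hK : ∀ i, 1 ≤ i → i ≤ n → K i = k i + if i = h then 0 else 1) :
    cCoef n (lamF n m1 (m + 1)) a K =
      ∑ τ ∈ (fill n (lamF n m1 m)).filter (fun τ => NR n (lamF n m1 m) k τ ∧
        (1 ≤ m → RowNext n a (fun i => τ (i, 1)))),
      (Polynomial.X : Polynomial ℤ) ^ (ascStat n (lamF n m1 m) τ +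
        rowW n m1 m a (fun i => τ (i, 1))) := by
  have hbot : ∀ τ, CCond n (lamF n m1 (m + 1)) a K τ → ∀ i, 2 ≤ i → i ≤ n → τ (i, 1) = a i := by
    intro τ hτ i h1 h2
    exact ((ccond_iff _ _ _ _ _).1 hτ).2 i (by rw [mem_dg_lam hn]; omega)
  have hdu : ∀ τ ∈ fill n (lamF n m1 m), down (up n a τ) = τ := by
    intro τ hτ
    rw [mem_fill] at hτ
    funext ⟨i, j⟩
    by_cases hj : j = 0
    · subst hj
      rw [hτ.2 (i, 0) (by rw [mem_dg_lam hn]; omega)]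
      simp [down]
    · rw [down_pos _ _ _ (by omega)]
      simp [up, hj]
  have hupb : ∀ τ i, 2 ≤ i → i ≤ n → up n a τ (i, 1) = a i := by
    intro τ i h1 h2
    simp [up, h1, h2]
  rw [cCoef_eq]
  apply Finset.sum_nbij' down (up n a)
  · intro τ hτ
    rw [Finset.mem_filter] at hτ ⊢
    have hb := hbot τ hτ.2
    have hk := (key_iff hn m1 m g k K hK τ hb).1 ((ccond_iff _ _ _ _ _).1 hτ.2).1
    refine ⟨?_, hk⟩
    rw [mem_fill]
    refine ⟨hk.1.1, ?_⟩
    rintro ⟨i, j⟩ hu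
    by_cases hj : j = 0
    · subst hj; simp [down]
    · rw [down_pos _ _ _ (by omega)]
      apply ((mem_fill _ _ _).1 hτ.1).2
      rw [mem_dg_lam hn] at hu ⊢
      omega
  · intro τ hτ
    rw [Finset.mem_filter] at hτ ⊢
    have hk : NR n (lamF n m1 (m + 1)) K (up n a τ) := by
      rw [key_iff hn m1 m g k K hK _ (hupb τ), hdu τ hτ.1]
      exact hτ.2
    refine ⟨?_, ?_⟩
    · rw [mem_fill]
      refine ⟨hk.1, ?_⟩
      rintro ⟨i, j⟩ hu
      rw [mem_dg_lam hn] at hu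
      simp only [up]
      split_ifs with q1 q2 q3
      · rfl
      · omega
      · rfl
      · apply ((mem_fill _ _ _).1 hτ.1).2
        rw [mem_dg_lam hn]
        omega
    · rw [ccond_iff]
      refine ⟨hk, fun i hi => ?_⟩
      rw [mem_dg_lam hn] at hi
      exact hupb τ i hi.1 hi.2.1
  · intro τ hτ
    rw [Finset.mem_filter] at hτ
    have hb := hbot τ hτ.2
    funext ⟨i, j⟩
    have hz := ((mem_fill _ _ _).1 hτ.1).2 (i, j)
    rw [mem_dg_lam hn] at hz
    simp only [up]
    split_ifs with q1 q2 q3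
    · rw [hz]; omega
    · subst q2; exact (hb i q3.1 q3.2).symm
    · rw [hz]; omega
    · rw [down_pos _ _ _ (by omega), show j - 1 + 1 = j by omega]
  · intro τ hτ
    rw [Finset.mem_filter] at hτ
    exact hdu τ hτ.1
  · intro τ hτ
    rw [Finset.mem_filter] at hτ
    rw [asc_succ hn m1 m τ (hbot τ hτ.2)]

/-- The number of boxes with a value not equal to the hole is positive. -/
theorem cCoef_zero {n : ℕ} (hn : 3 ≤ n) (m1 m : ℕ) {a : ℕ → ℕ} {h : ℕ} (g : Good n a h)
    (K : ℕ → ℕ) (i : ℕ) (h1 : 1 ≤ i) (h2 : i ≤ n) (hi : i ≠ h) (h0 : K i = 0) :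
    cCoef n (lamF n m1 (m + 1)) a K = 0 := by
  classical
  rw [cCoef_eq]
  apply Finset.sum_eq_zero
  intro τ hτ
  exfalso
  rw [Finset.mem_filter] at hτ
  have hc := (ccond_iff _ _ _ _ _).1 hτ.2
  have := hc.1.2.2.2 i h1 h2
  rw [count_succ hn m1 m g τ (fun i h1 h2 => hc.2 i (by rw [mem_dg_lam hn]; omega)) i ⟨h1, h2⟩,
    if_neg hi, h0] at this
  omega

theorem rowW_congr (n m1 m : ℕ) (a a' a'' : ℕ → ℕ) (H : ∀ i, 2 ≤ i → i ≤ n → a' i = a'' i) :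
    rowW n m1 m a a' = rowW n m1 m a a'' := by
  apply Finset.sum_congr rfl
  intro i hi
  rw [Finset.mem_Icc] at hi
  rw [H i hi.1 hi.2]

theorem RowNext.congr {n : ℕ} {a a' a'' : ℕ → ℕ} (hr : RowNext n a a')
    (H : ∀ i, 2 ≤ i → i ≤ n → a' i = a'' i) : RowNext n a a'' := by
  refine ⟨fun i h1 h2 => ?_, fun i c h1 h2 h3 => ?_⟩
  · have := hr.1 i h1 h2
    have e : {x | ∃ c, 2 ≤ c ∧ c ≤ i ∧ a' c = x} = {x | ∃ c, 2 ≤ c ∧ c ≤ i ∧ a'' c = x} := by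
      ext x
      constructor
      · rintro ⟨c, q1, q2, q3⟩; exact ⟨c, q1, q2, by rw [← H c q1 (by omega), q3]⟩
      · rintro ⟨c, q1, q2, q3⟩; exact ⟨c, q1, q2, by rw [H c q1 (by omega), q3]⟩
    rwa [e, H i h1 h2] at this
  · rw [← H i h1 (by omega)]; exact hr.2 i c h1 h2 h3

/-- Every injective row has a hole. -/
theorem exists_hole {n : ℕ} (hn : 3 ≤ n) (a : ℕ → ℕ)
    (h1 : ∀ i, 2 ≤ i → i ≤ n → 1 ≤ a i ∧ a i ≤ n)
    (h2 : ∀ i c, 2 ≤ i → i < c → c ≤ n → a i ≠ a c) : ∃ b, Good n a b := by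
  have hc : ((Finset.Icc 2 n).image a).card < (Finset.Icc 1 n).card := by
    refine lt_of_le_of_lt Finset.card_image_le ?_
    simp; omega
  obtain ⟨b, hb, hb'⟩ := Finset.exists_mem_notMem_of_card_lt_card hc
  rw [Finset.mem_Icc] at hb
  refine ⟨b, hb.1, hb.2, fun i q1 q2 => ⟨(h1 i q1 q2).1, (h1 i q1 q2).2, fun e => hb' ?_⟩, ?_⟩
  · rw [Finset.mem_image]; exact ⟨i, by simp [q1, q2], e⟩
  · intro i c q1 q2 q3 q4 e
    rcases lt_trichotomy i c with r | r | r
    · exact absurd e (h2 i c q1 r q4)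
    · exact r
    · exact absurd e.symm (h2 c i q3 r q2)

theorem Good.hole_unique {n : ℕ} {a : ℕ → ℕ} {h h' : ℕ} (g : Good n a h) (g' : Good n a h') :
    h = h' := by
  have e := g.image.symm.trans g'.image
  by_contra hne
  have : h ∈ (Finset.Icc 1 n).erase h' := by simp [hne, g.1, g.2.1]
  rw [← e] at this
  simp at this

theorem Good.congr {n : ℕ} {a a' : ℕ → ℕ} {h : ℕ} (g : Good n a h)
    (H : ∀ i, 2 ≤ i → i ≤ n → a' i = a i) : Good n a' h := by
  refine ⟨g.1, g.2.1, fun i h1 h2 => ?_, fun i c h1 h2 h3 h4 e => ?_⟩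
  · rw [H i h1 h2]; exact g.2.2.1 i h1 h2
  · rw [H i h1 h2, H c h3 h4] at e; exact g.2.2.2 i c h1 h2 h3 h4 e

theorem peelB {n : ℕ} (hn : 3 ≤ n) (m1 m : ℕ) (hm : 1 ≤ m) {a : ℕ → ℕ} {h : ℕ} (g : Good n a h)
    (k K : ℕ → ℕ) (hK : ∀ i, 1 ≤ i → i ≤ n → K i = k i + if i = h then 0 else 1) :
    cCoef n (lamF n m1 (m + 1)) a K =
      ∑ b ∈ Finset.Icc 1 n, (Polynomial.X : Polynomial ℤ) ^ (rowW n m1 m a (nextRow n a h b)) *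
        cCoef n (lamF n m1 m) (nextRow n a h b) k := by
  classical
  have hrow : ∀ τ b, CCond n (lamF n m1 m) (nextRow n a h b) k τ →
      ∀ i, 2 ≤ i → i ≤ n → τ (i, 1) = nextRow n a h b i := by
    intro τ b hτ i h1 h2
    exact ((ccond_iff _ _ _ _ _).1 hτ).2 i (by rw [mem_dg_lam hn]; omega)
  rw [peelA hn m1 m g k K hK]
  have hR : ∀ b, (Polynomial.X : Polynomial ℤ) ^ (rowW n m1 m a (nextRow n a h b)) *
        cCoef n (lamF n m1 m) (nextRow n a h b) k =
      ∑ τ ∈ (fill n (lamF n m1 m)).filter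
          (fun τ => CCond n (lamF n m1 m) (nextRow n a h b) k τ),
        (Polynomial.X : Polynomial ℤ) ^ (ascStat n (lamF n m1 m) τ +
          rowW n m1 m a (fun i => τ (i, 1))) := by
    intro b
    rw [cCoef_eq, Finset.mul_sum]
    apply Finset.sum_congr rfl
    intro τ hτ
    rw [Finset.mem_filter] at hτ
    rw [rowW_congr n m1 m a (fun i => τ (i, 1)) _ (hrow τ b hτ.2), pow_add, mul_comm]
  simp only [hR]
  rw [← Finset.sum_biUnion]
  · apply Finset.sum_congr _ (fun _ _ => rfl)
    ext τ
    simp only [Finset.mem_filter, Finset.mem_biUnion, Finset.mem_Icc]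
    constructor
    · rintro ⟨hf, hN, hr⟩
      have hat := (attack_iff hn m1 m τ).1 hN.2.1
      obtain ⟨b, gb⟩ := exists_hole hn (fun i => τ (i, 1))
        (fun i h1 h2 => hN.1 (i, 1) (by rw [mem_dg_lam hn]; omega))
        (fun i c h1 h2 h3 => hat.1 i c 1 h1 h2 h3 le_rfl hm)
      refine ⟨b, ⟨gb.1, gb.2.1⟩, hf, (ccond_iff _ _ _ _ _).2 ⟨hN, fun i hi => ?_⟩⟩
      rw [mem_dg_lam hn] at hi
      exact nextRow_unique g gb (hr hm) i hi.1 hi.2.1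
    · rintro ⟨b, hb, hf, hC⟩
      refine ⟨hf, ((ccond_iff _ _ _ _ _).1 hC).1, fun _ => ?_⟩
      exact (nextRow_next g hb).congr (fun i h1 h2 => (hrow τ b hC i h1 h2).symm)
  · intro b hb b' hb' hne
    rw [Function.onFun, Finset.disjoint_left]
    intro τ h1 h2
    rw [Finset.mem_filter] at h1 h2
    simp only [Finset.coe_Icc, Set.mem_Icc] at hb hb'
    have g1 := (nextRow_good g hb).congr (hrow τ b h1.2)
    have g2 := (nextRow_good g hb').congr (hrow τ b' h2.2)
    exact hne (g1.hole_unique g2)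

theorem hol_pen {n : ℕ} (hn : 3 ≤ n) {a : ℕ → ℕ} {h : ℕ} (b : ℕ) (g : Good n a h) :
    hol n a h b (n - 1) =
      if b = a n then cyc {x | 1 ≤ x ∧ x ≤ n ∧ x ≠ a n} b else b := by
  have hs := hol_step n a h b (n - 1) (by omega)
  rw [show n - 1 + 1 = n by omega, hol_top] at hs
  have hU : U a h (n - 1) = {x | 1 ≤ x ∧ x ≤ n ∧ x ≠ a n} := by
    ext x
    have h1 := U_succ a h (n - 1) (by omega) x
    have h2 := g.not_mem (n - 1) (by omega) (by omega)
    rw [show n - 1 + 1 = n by omega] at h1 h2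
    rw [g.U_top] at h1
    rw [Set.mem_ofPred_eq]
    constructor
    · intro hx
      have := h1.2 (Or.inl hx)
      exact ⟨this.1, this.2, fun e => h2 (e ▸ hx)⟩
    · rintro ⟨q1, q2, q3⟩
      exact (h1.1 ⟨q1, q2⟩).resolve_right q3
  rw [hs, hU]

theorem nextRow_last {n : ℕ} {a : ℕ → ℕ} {h : ℕ} (b : ℕ) :
    nextRow n a h b n = if b = a n then hol n a h b (n - 1) else a n := by
  rw [nextRow, hol_top]

theorem rowW_next {n : ℕ} (hn : 3 ≤ n) (m1 m : ℕ) {a : ℕ → ℕ} {h b : ℕ} (g : Good n a h)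
    (hb : 1 ≤ b ∧ b ≤ n) :
    rowW n m1 m a (nextRow n a h b) = (if h < hol n a h b (n - 1) then m else 0) +
      if nextRow n a h b n < a n then m1 + m else 0 := by
  rw [← wraps g hb m (n - 1) (by omega) (by omega), rowW]
  obtain ⟨N, rfl⟩ : ∃ N, n = N + 1 := ⟨n - 1, by omega⟩
  rw [Finset.sum_Icc_succ_top (by omega)]
  simp only [Nat.add_sub_cancel]
  congr 1
  · apply Finset.sum_congr rfl
    intro i hi
    rw [Finset.mem_Icc] at hi
    have : lamF (N + 1) m1 m i = m := by
      simp only [lamF]; rw [if_neg (by omega), if_pos hi.1]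
    rw [this]
  · simp [lamF]

theorem sym {n : ℕ} (hn : 3 ≤ n) (m1 m : ℕ) : ∀ (a a' : ℕ → ℕ) (h : ℕ) (_ : Good n a h)
    (_ : Good n a' h) (_ : a n = a' n) (K : ℕ → ℕ),
    cCoef n (lamF n m1 (m + 1)) a K = cCoef n (lamF n m1 (m + 1)) a' K := by
  induction m with
  | zero =>
    intro a a' h g g' e K
    by_cases hz : ∃ i, 1 ≤ i ∧ i ≤ n ∧ i ≠ h ∧ K i = 0
    · obtain ⟨i, h1, h2, h3, h4⟩ := hz
      rw [cCoef_zero hn m1 0 g K i h1 h2 h3 h4, cCoef_zero hn m1 0 g' K i h1 h2 h3 h4]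
    · have hK : ∀ i, 1 ≤ i → i ≤ n →
          K i = (fun i => if i = h then K i else K i - 1) i + if i = h then 0 else 1 := by
        intro i h1 h2
        by_cases q : i = h
        · simp [q]
        · have : K i ≠ 0 := fun r => hz ⟨i, h1, h2, q, r⟩
          simp [q]; omega
      rw [peelA hn m1 0 g _ K hK, peelA hn m1 0 g' _ K hK]
      have hw : ∀ r, rowW n m1 0 a r = rowW n m1 0 a' r := by
        intro r
        apply Finset.sum_congr rfl
        intro i hi
        by_cases q : i = n
        · rw [q, e]
        · simp [lamF, q]
      simp only [hw]
      apply Finset.sum_congr _ (fun _ _ => rfl)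
      ext τ
      simp
  | succ m ih =>
    intro a a' h g g' e K
    by_cases hz : ∃ i, 1 ≤ i ∧ i ≤ n ∧ i ≠ h ∧ K i = 0
    · obtain ⟨i, h1, h2, h3, h4⟩ := hz
      rw [cCoef_zero hn m1 _ g K i h1 h2 h3 h4, cCoef_zero hn m1 _ g' K i h1 h2 h3 h4]
    · have hK : ∀ i, 1 ≤ i → i ≤ n →
          K i = (fun i => if i = h then K i else K i - 1) i + if i = h then 0 else 1 := by
        intro i h1 h2
        by_cases q : i = h
        · simp [q]
        · have : K i ≠ 0 := fun r => hz ⟨i, h1, h2, q, r⟩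
          simp [q]; omega
      rw [peelB hn m1 (m + 1) (by omega) g _ K hK, peelB hn m1 (m + 1) (by omega) g' _ K hK]
      apply Finset.sum_congr rfl
      intro b hb
      rw [Finset.mem_Icc] at hb
      have e1 : hol n a h b (n - 1) = hol n a' h b (n - 1) := by
        rw [hol_pen hn b g, hol_pen hn b g', e]
      have e2 : nextRow n a h b n = nextRow n a' h b n := by
        rw [nextRow_last, nextRow_last, e1, e]
      rw [rowW_next hn m1 _ g hb, rowW_next hn m1 _ g' hb, e1, e2, e,
        ih _ _ b (nextRow_good g hb) (nextRow_good g' hb) e2]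

theorem aTuple_last (n x b : ℕ) : aTuple n x b n = b := by simp [aTuple]

theorem aTuple_good {n : ℕ} (hn : 3 ≤ n) (x b : ℕ) (hx : 1 ≤ x ∧ x ≤ n) (hb : 1 ≤ b ∧ b ≤ n)
    (hne : x ≠ b) : Good n (aTuple n x b) x := by
  set S := ((Finset.Icc 1 n).erase x).erase b with hS
  have hcard : S.card = n - 2 := by
    rw [hS, Finset.card_erase_of_mem, Finset.card_erase_of_mem]
    · simp; omega
    · simp [hx]
    · simp [hb, Ne.symm hne]
  have hlen : (S.sort (· ≤ ·)).length = n - 2 := by rw [Finset.length_sort, hcard]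
  have hval : ∀ i, i ≠ n → 2 ≤ i → i ≤ n → ∃ hl : n - 1 - i < (S.sort (· ≤ ·)).length,
      aTuple n x b i = (S.sort (· ≤ ·))[n - 1 - i] := by
    intro i q1 q2 q3
    have hl : n - 1 - i < (S.sort (· ≤ ·)).length := by omega
    refine ⟨hl, ?_⟩
    simp only [aTuple]
    rw [if_neg q1, ← hS, List.getD_eq_getElem _ _ hl]
  have hmem : ∀ i, i ≠ n → 2 ≤ i → i ≤ n → aTuple n x b i ∈ S := by
    intro i q1 q2 q3
    obtain ⟨hl, e⟩ := hval i q1 q2 q3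
    rw [e, ← Finset.mem_sort (· ≤ ·)]
    exact List.getElem_mem hl
  refine ⟨hx.1, hx.2, fun i h1 h2 => ?_, fun i c h1 h2 h3 h4 e => ?_⟩
  · by_cases q : i = n
    · rw [q, aTuple_last]; exact ⟨hb.1, hb.2, Ne.symm hne⟩
    · have := hmem i q h1 h2
      rw [hS] at this
      simp only [Finset.mem_erase, Finset.mem_Icc] at this
      tauto
  · have hbS : b ∉ S := by simp [hS]
    by_cases q : i = n
    · by_cases q' : c = n
      · rw [q, q']
      · rw [q, aTuple_last] at e
        exact absurd (e ▸ hmem c q' h3 h4) hbS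
    · by_cases q' : c = n
      · rw [q', aTuple_last] at e
        exact absurd (e ▸ hmem i q h1 h2) hbS
      · obtain ⟨l1, e1⟩ := hval i q h1 h2
        obtain ⟨l2, e2⟩ := hval c q' h3 h4
        rw [e1, e2] at e
        have := (List.Nodup.getElem_inj_iff (Finset.sort_nodup S (· ≤ ·))).1 e
        omega

theorem cyc_two {n : ℕ} (hn : 3 ≤ n) : cyc {x | 1 ≤ x ∧ x ≤ n ∧ x ≠ 1} 1 = 2 := by
  have h2 : (2 : ℕ) ∈ {x | 1 ≤ x ∧ x ≤ n ∧ x ≠ 1} := ⟨by omega, by omega, by omega⟩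
  obtain ⟨q1, q2⟩ := cyc_spec {x | 1 ≤ x ∧ x ≤ n ∧ x ≠ 1} 1 ⟨2, h2⟩
  have q3 : 1 ≤ cyc {x | 1 ≤ x ∧ x ≤ n ∧ x ≠ 1} 1 ∧ _ ∧ cyc {x | 1 ≤ x ∧ x ≤ n ∧ x ≠ 1} 1 ≠ 1 := q1
  rcases q2 with q | q
  · have := q.2 2 h2 (by omega)
    omega
  · have := q.1 2 h2
    omega

theorem main_t1 {n : ℕ} (hn : 3 ≤ n) (m₁ m : ℕ) (j : ℕ) (hj1 : 2 ≤ j)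
    (k : ℕ → ℕ) (a : ℕ → ℕ) (g : Good n a j) (hlast : a n = 1) :
    (Polynomial.X : Polynomial ℤ) ^ (rowW n m₁ (m + 1) a (nextRow n a j 1)) *
        cCoef n (lamF n m₁ (m + 1)) (nextRow n a j 1) k =
      cCoef n (lamF n m₁ (m + 1)) (aTuple n 1 2) k := by
  have hb : 1 ≤ 1 ∧ 1 ≤ n := ⟨le_rfl, by omega⟩
  have hp := hol_pen hn 1 g
  rw [hlast, if_pos rfl, cyc_two hn] at hp
  have hl : nextRow n a j 1 n = 2 := by
    rw [nextRow_last, hlast, if_pos rfl, hp]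
  have hw : rowW n m₁ (m + 1) a (nextRow n a j 1) = 0 := by
    rw [rowW_next hn m₁ _ g hb, hp, hl, hlast, if_neg (by omega), if_neg (by omega)]
  rw [hw, pow_zero, one_mul]
  exact sym hn m₁ m _ _ 1 (nextRow_good g hb)
    (aTuple_good hn 1 2 hb ⟨by omega, by omega⟩ (by omega)) (by rw [hl, aTuple_last]) k

theorem main_t2 {n : ℕ} (hn : 3 ≤ n) (m₁ m : ℕ) (j : ℕ)
    (k : ℕ → ℕ) (a : ℕ → ℕ) (g : Good n a j) (hlast : a n = 1) (b : ℕ) (hb1 : 2 ≤ b)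
    (hb2 : b ≤ n) :
    (Polynomial.X : Polynomial ℤ) ^ (rowW n m₁ (m + 1) a (nextRow n a j b)) *
        cCoef n (lamF n m₁ (m + 1)) (nextRow n a j b) k =
      (Polynomial.X : Polynomial ℤ) ^ (if j < b then m + 1 else 0) *
        cCoef n (lamF n m₁ (m + 1)) (aTuple n b 1) k := by
  have hb : 1 ≤ b ∧ b ≤ n := ⟨by omega, by omega⟩
  have hp := hol_pen hn b g
  rw [hlast, if_neg (by omega)] at hp
  have hl : nextRow n a j b n = 1 := by
    rw [nextRow_last, hlast, if_neg (by omega)]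
  have hw : rowW n m₁ (m + 1) a (nextRow n a j b) = if j < b then m + 1 else 0 := by
    rw [rowW_next hn m₁ _ g hb, hp, hl, hlast, if_neg (by omega : ¬ 1 < 1), add_zero]
  rw [hw, sym hn m₁ m _ _ b (nextRow_good g hb)
    (aTuple_good hn b 1 hb ⟨by omega, by omega⟩ (by omega)) (by rw [hl, aTuple_last]) k]

theorem main_aux {n : ℕ} (hn : 3 ≤ n) (m₁ m : ℕ) (j : ℕ) (hj1 : 2 ≤ j) (hj2 : j ≤ n)
    (k K : ℕ → ℕ) (hK : ∀ i, 1 ≤ i → i ≤ n → K i = k i + if i = j then 0 else 1)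
    (a : ℕ → ℕ) (g : Good n a j) (hlast : a n = 1) :
    cCoef n (lamF n m₁ (m + 1 + 1)) a K =
      (∑ i ∈ Finset.Icc 2 j, cCoef n (lamF n m₁ (m + 1)) (aTuple n i 1) k) +
          Polynomial.X ^ (m + 1) *
            (∑ i ∈ Finset.Icc (j + 1) n, cCoef n (lamF n m₁ (m + 1)) (aTuple n i 1) k) +
          cCoef n (lamF n m₁ (m + 1)) (aTuple n 1 2) k := by
  have hsplit : Finset.Icc 2 n = Finset.Icc 2 j ∪ Finset.Icc (j + 1) n := by
    ext x; simp only [Finset.mem_union, Finset.mem_Icc]; omega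
  have hdisj : Disjoint (Finset.Icc 2 j) (Finset.Icc (j + 1) n) := by
    rw [Finset.disjoint_left]; intro x; simp only [Finset.mem_Icc]; omega
  have s1 : ∑ b ∈ Finset.Icc 2 j,
      (Polynomial.X : Polynomial ℤ) ^ (rowW n m₁ (m + 1) a (nextRow n a j b)) *
        cCoef n (lamF n m₁ (m + 1)) (nextRow n a j b) k =
      ∑ i ∈ Finset.Icc 2 j, cCoef n (lamF n m₁ (m + 1)) (aTuple n i 1) k := by
    apply Finset.sum_congr rfl
    intro b hb
    rw [Finset.mem_Icc] at hb
    have q : ¬ j < b := by omega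
    rw [main_t2 hn m₁ m j k a g hlast b hb.1 (hb.2.trans hj2), if_neg q, pow_zero, one_mul]
  have s2 : ∑ b ∈ Finset.Icc (j + 1) n,
      (Polynomial.X : Polynomial ℤ) ^ (rowW n m₁ (m + 1) a (nextRow n a j b)) *
        cCoef n (lamF n m₁ (m + 1)) (nextRow n a j b) k =
      Polynomial.X ^ (m + 1) *
        (∑ i ∈ Finset.Icc (j + 1) n, cCoef n (lamF n m₁ (m + 1)) (aTuple n i 1) k) := by
    rw [Finset.mul_sum]
    apply Finset.sum_congr rfl
    intro b hb
    rw [Finset.mem_Icc] at hb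
    have q : j < b := by omega
    have q2 : 2 ≤ b := by omega
    rw [main_t2 hn m₁ m j k a g hlast b q2 hb.2, if_pos q]
  rw [peelB hn m₁ (m + 1) (Nat.succ_le_succ (Nat.zero_le m)) g k K hK, sum_Icc_one n hn,
    main_t1 hn m₁ m j hj1 k a g hlast, hsplit, Finset.sum_union hdisj, s1, s2]
  exact add_comm _ _

end CO

open CO in
/-- The recurrence for `c^{λ⁺}_{j|1}` with
`λ = (0, m₂, …, m₂, m₁+m₂)` and `λ⁺ = (0, m₂+1, …, m₂+1, m₁+m₂+1)`:
`c^{λ⁺}_{j|1}(k₁+1,…,k_{j-1}+1,k_j,k_{j+1}+1,…,k_n+1)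
  = Σ_{i=2}^{j} c^λ_{i|1}(k) + q^{m₂} Σ_{i=j+1}^{n} c^λ_{i|1}(k) + c^λ_{1|2}(k)`. -/
theorem cbar_recurrence (n : ℕ) (hn : 3 ≤ n) (m₁ m₂ : ℕ) (hm₂ : 1 ≤ m₂)
    (lam lamP : ℕ → ℕ)
    (hlam : lam = fun i => if i = n then m₁ + m₂ else if 2 ≤ i then m₂ else 0)
    (hlamP : lamP = fun i => if i = n then m₁ + m₂ + 1 else if 2 ≤ i then m₂ + 1 else 0)
    (j : ℕ) (hj1 : 2 ≤ j) (hj2 : j ≤ n) (k : ℕ → ℕ) :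
    cBar n lamP j 1 (fun i => if i = j then k i else k i + 1)
      = (∑ i ∈ Finset.Icc 2 j, cBar n lam i 1 k) +
          Polynomial.X ^ m₂ * (∑ i ∈ Finset.Icc (j + 1) n, cBar n lam i 1 k) +
          cBar n lam 1 2 k := by
  obtain ⟨m, rfl⟩ : ∃ m, m₂ = m + 1 := ⟨m₂ - 1, by omega⟩
  subst hlam hlamP
  have g := aTuple_good hn j 1 ⟨by omega, hj2⟩ ⟨le_rfl, by omega⟩ (by omega)
  exact main_aux hn m₁ m j hj1 hj2 k _ (by
    intro i _ _
    by_cases q : i = j <;> simp [q]) _ g (aTuple_last n j 1)
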